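/- Let p < q be reals, let n ≥ 1 be an integer, let f be (2n+1)-times continuously differentiable on [p,q], let x, x+h ∈ [p,q] with h ≠ 0, and let x, x_0, …, x_n be pairwise distinct points of [p,q]. Define a_0 = 1, a_k = −(a_0·A_k(x) + … + a_{k−1}·A_1(x)) for k = 1, …, n, and γ_k = Σ_{m=0}^{n−k} a_m·h^{k+m+1}/(k+m+1) for k = 0, …, n. Then there exist points ξ_{k,j} (0 ≤ j ≤ k ≤ n) in the smallest closed interval containing x, x_0, …, x_n, and a real R with |R| ≤ (sup over the closed interval with endpoints x and x+h of |f^{(n+1)}|)·|h|^{n+2}/(n+2)!, such that ∫_x^{x+h} f(t)dt = Σ_{k=0}^{n} Ã^{(k)}_{0,1,…,n}[x]·γ_k + ∏_{i=0}^{n}(x − x_i) · Σ_{k=0}^{n} Σ_{j=0}^{k} a_j·(h^{k+1}/(k+1))·f^{(k+n+1−j)}(ξ_{k,j})/(k+n+1−j)! + R. -/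

import Mathlib

/-- Divided difference `f[y i, y (i+1), …, y j]` defined by the standard recursion
`f[y_i,…,y_j] = (f[y_{i+1},…,y_j] − f[y_i,…,y_{j−1}])/(y_j − y_i)`. -/
noncomputable def divDiff (f : ℝ → ℝ) (y : ℕ → ℝ) (i j : ℕ) : ℝ :=
  if _h : j ≤ i then f (y i)
  else (divDiff f y (i + 1) j - divDiff f y i (j - 1)) / (y j - y i)
termination_by j - i
decreasing_by all_goals omega

/-- Neville iteration: `neville xs x g i j` is the iterate built from the initial
values `g j` (at node `xs j`) over the nodes `xs j, …, xs (j+i)`. -/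
noncomputable def neville (xs : ℕ → ℝ) (x : ℝ) (g : ℕ → ℝ) : ℕ → ℕ → ℝ
  | 0, j => g j
  | i + 1, j =>
      ((xs (i + 1 + j) - x) * neville xs x g i j - (xs j - x) * neville xs x g i (j + 1)) /
        (xs (i + 1 + j) - xs j)

/-- Aitken iteration with base index `r`: `aitken xs x g r i j` is the iterate
`d_{r,r+1,…,i,j}` (for `r ≤ i < j`) built from the initial values `g j` at the nodes `xs j`. -/
noncomputable def aitken (xs : ℕ → ℝ) (x : ℝ) (g : ℕ → ℝ) (r : ℕ) (i j : ℕ) : ℝ :=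
  if _h : i ≤ r then ((xs j - x) * g r - (xs r - x) * g j) / (xs j - xs r)
  else ((xs j - x) * aitken xs x g r (i - 1) i - (xs i - x) * aitken xs x g r (i - 1) j) /
        (xs j - xs i)
termination_by i
decreasing_by all_goals omega

/-- The full Aitken iterate `d_{r,r+1,…,n}` (equal to the initial value when `n = r`). -/
noncomputable def aitkenLast (xs : ℕ → ℝ) (x : ℝ) (g : ℕ → ℝ) (r n : ℕ) : ℝ :=
  if n ≤ r then g n else aitken xs x g r (n - 1) n

/-- Confluent divided difference `g[x,…,x (m times), xi]`, defined using
`g[x,…,x (m times)] = g^{(m−1)}(x)/(m−1)!` and `g[xi] = g xi`. -/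
noncomputable def confDD (g : ℝ → ℝ) (x xi : ℝ) : ℕ → ℝ
  | 0 => g xi
  | m + 1 => (confDD g x xi m - iteratedDeriv m g x / (Nat.factorial m : ℝ)) / (xi - x)

/-!
The Aitken iterate over `x_0, …, x_n` is the value at `x` of the Lagrange interpolant of its initial
data. Let `T` be the Taylor polynomial of order `k` of `f` at `x`, and interpolate
`(f - T) / (· - x)^k` at the nodes by a polynomial `W` of degree `n + 1` that also vanishes at `x`.
Then `T + W (X - x)^k` agrees with `f` at the nodes and to order `k` at `x`, so Rolle's theorem,
counting the zero at `x` with multiplicity, gives its leading coefficient as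
`f^{(n+1+k)}(ξ) / (n+1+k)!`. Expanding `W(x) = 0` by linearity of interpolation shows that the
convolution of the Taylor coefficients of `f` with the `A_r(x)` is `Ã^{(k)}` plus a remainder.

The recurrence for `a` makes it the convolution inverse of `A_r(x)`, which solves for the Taylor
coefficients; they enter the Taylor expansion of `u ↦ ∫_x^u f` with Lagrange remainder.
-/

section Rolle

open Finset

variable {J : Set ℝ}

lemma exists_interlacing_zeros (hJ : J.OrdConnected) {g g' : ℝ → ℝ}
    (hg : ∀ t ∈ J, HasDerivWithinAt g (g' t) J t) {N : ℕ} {z : Fin (N + 1) → ℝ}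
    (hz : StrictMono z) (hzJ : ∀ i, z i ∈ J) (hz0 : ∀ i, g (z i) = 0) :
    ∃ y : Fin N → ℝ, ∀ i, y i ∈ Set.Ioo (z i.castSucc) (z i.succ) ∧ g' (y i) = 0 := by
  have rolle (i : Fin N) : ∃ y ∈ Set.Ioo (z i.castSucc) (z i.succ), g' y = 0 := by
    have hsub : Set.Icc (z i.castSucc) (z i.succ) ⊆ J := hJ.out (hzJ _) (hzJ _)
    refine exists_hasDerivAt_eq_zero (hz Fin.castSucc_lt_succ)
      (fun t ht => (hg t (hsub ht)).continuousWithinAt.mono hsub) (by rw [hz0, hz0]) fun t ht => ?_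
    exact (hg t (hsub (Set.Ioo_subset_Icc_self ht))).hasDerivAt
      (Filter.mem_of_superset (Icc_mem_nhds ht.1 ht.2) hsub)
  choose y hy hy0 using rolle
  exact ⟨y, fun i => ⟨hy i, hy0 i⟩⟩

lemma exists_finset_zeros_deriv (hJ : J.OrdConnected) {g g' : ℝ → ℝ}
    (hg : ∀ t ∈ J, HasDerivWithinAt g (g' t) J t) {N : ℕ} {S : Finset ℝ} (hcard : #S = N + 1)
    (hSJ : ↑S ⊆ J) (hS0 : ∀ s ∈ S, g s = 0) :
    ∃ S' : Finset ℝ, #S' = N ∧ Disjoint S' S ∧ ↑S' ⊆ J ∧ ∀ s ∈ S', g' s = 0 := by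
  let z := S.orderEmbOfFin hcard
  have hzS (i) : z i ∈ S := S.orderEmbOfFin_mem hcard i
  obtain ⟨y, hy⟩ := exists_interlacing_zeros hJ hg z.strictMono (fun i => hSJ (hzS i))
    fun i => hS0 _ (hzS i)
  have hy_mono : StrictMono y := fun i j hij =>
    (hy i).1.2.trans_le <| (z.monotone (Fin.succ_le_castSucc_iff.2 hij)).trans (hy j).1.1.le
  refine ⟨univ.image y, ?_, ?_, ?_, ?_⟩
  · rw [card_image_of_injective _ hy_mono.injective, card_fin]
  · rw [disjoint_left]
    intro s hs hsS
    obtain ⟨i, -, rfl⟩ := mem_image.1 hs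
    obtain ⟨j, hj⟩ : y i ∈ Set.range z := by rwa [S.range_orderEmbOfFin hcard]
    have hij : i.castSucc < j ∧ j < i.succ := by
      simpa only [← hj, Set.mem_Ioo, z.lt_iff_lt] using (hy i).1
    exact (Fin.castSucc_lt_iff_succ_le.1 hij.1).not_gt hij.2
  · intro s hs
    obtain ⟨i, -, rfl⟩ := mem_image.1 hs
    exact hJ.out (hSJ (hzS _)) (hSJ (hzS _)) (Set.Ioo_subset_Icc_self (hy i).1)
  · simp only [mem_image, mem_univ, true_and, forall_exists_index, forall_apply_eq_imp_iff]
    exact fun i => (hy i).2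

lemma exists_zero_of_card_zeros (hJ : J.OrdConnected) {N : ℕ} {G : ℕ → ℝ → ℝ}
    (hG : ∀ m < N, ∀ t ∈ J, HasDerivWithinAt (G m) (G (m + 1) t) J t)
    {S : Finset ℝ} (hcard : #S = N + 1) (hSJ : ↑S ⊆ J) (hS0 : ∀ s ∈ S, G 0 s = 0) :
    ∃ ξ ∈ J, G N ξ = 0 := by
  induction N generalizing G S with
  | zero =>
    obtain ⟨s, rfl⟩ := card_eq_one.1 hcard
    exact ⟨s, hSJ (mem_singleton_self s), hS0 s (mem_singleton_self s)⟩
  | succ N ih =>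
    obtain ⟨S', hcard', -, hSJ', hS0'⟩ :=
      exists_finset_zeros_deriv hJ (hG 0 N.succ_pos) hcard hSJ hS0
    exact ih (G := fun m => G (m + 1)) (fun m hm => hG (m + 1) (by lia)) hcard' hSJ' hS0'

lemma exists_zero_of_multiple_zero (hJ : J.OrdConnected) {k : ℕ} {G : ℕ → ℝ → ℝ}
    {S : Finset ℝ} (hG : ∀ m < #S + k, ∀ t ∈ J, HasDerivWithinAt (G m) (G (m + 1) t) J t)
    {x : ℝ} (hx : x ∈ J) (hGx : ∀ m ≤ k, G m x = 0) (hxS : x ∉ S) (hSJ : ↑S ⊆ J)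
    (hS0 : ∀ s ∈ S, G 0 s = 0) :
    ∃ ξ ∈ J, G (#S + k) ξ = 0 := by
  have hcard : #(insert x S) = #S + 1 := card_insert_of_notMem hxS
  have hxSJ : ↑(insert x S) ⊆ J := by
    rw [coe_insert]
    exact Set.insert_subset hx hSJ
  have hxS0 : ∀ s ∈ insert x S, G 0 s = 0 := forall_mem_insert .. |>.2 ⟨hGx 0 k.zero_le, hS0⟩
  induction k generalizing G S with
  | zero => exact exists_zero_of_card_zeros hJ hG hcard hxSJ hxS0
  | succ k ih =>
    obtain ⟨S', hcard', hdisj, hSJ', hS0'⟩ :=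
      exists_finset_zeros_deriv hJ (hG 0 (by lia)) hcard hxSJ hxS0
    have hxS' : x ∉ S' := disjoint_right.1 hdisj (mem_insert_self x S)
    rw [← hcard', ← add_assoc]
    refine ih (G := fun m => G (m + 1)) (fun m hm => hG (m + 1) (by lia))
      (fun m hm => hGx (m + 1) (by lia)) hxS' hSJ' hS0' (card_insert_of_notMem hxS') ?_ ?_
    · rw [coe_insert]
      exact Set.insert_subset hx hSJ'
    · exact forall_mem_insert .. |>.2 ⟨hGx 1 (by lia), hS0'⟩

end Rolle

section Interpolation

open Finset Polynomial

lemma eval_iterate_derivative_eq_factorial_mul_coeff {R : Type*} [CommSemiring R] {P : R[X]}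
    {N : ℕ} (hP : P.natDegree ≤ N) (t : R) :
    (derivative^[N] P).eval t = N.factorial * P.coeff N := by
  have hdeg : (derivative^[N] P).natDegree ≤ 0 := (natDegree_iterate_derivative P N).trans (by lia)
  rw [eq_C_of_natDegree_le_zero hdeg, eval_C, coeff_iterate_derivative, zero_add,
    Nat.descFactorial_self, nsmul_eq_mul]

lemma eval_iterate_derivative_eq_factorial_mul_coeff_taylor {R : Type*} [CommSemiring R]
    (P : R[X]) (m : ℕ) (t : R) :
    (derivative^[m] P).eval t = m.factorial * (taylor t P).coeff m := by
  rw [taylor_coeff, ← factorial_smul_hasseDeriv, LinearMap.smul_apply, eval_smul, nsmul_eq_mul]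

lemma iteratedDerivWithin_eq_factorial_mul_taylorCoeffWithin (f : ℝ → ℝ) (m : ℕ) (I : Set ℝ)
    (t : ℝ) : iteratedDerivWithin m f I t = m.factorial * taylorCoeffWithin f m I t := by
  rw [taylorCoeffWithin, smul_eq_mul, mul_inv_cancel_left₀ (Nat.cast_ne_zero.2 m.factorial_ne_zero)]

variable {I J : Set ℝ} {f : ℝ → ℝ} {x : ℝ} {k : ℕ}

lemma exists_taylorCoeffWithin_eq_coeff {S : Finset ℝ} (hf : ContDiffOn ℝ (#S + k : ℕ) f I)
    (hI : UniqueDiffOn ℝ I) (hJ : J.OrdConnected) (hJI : J ⊆ I) (hx : x ∈ J) (hxS : x ∉ S)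
    (hSJ : ↑S ⊆ J) {P : ℝ[X]} (hdeg : P.natDegree ≤ #S + k)
    (hPx : ∀ m ≤ k, (taylor x P).coeff m = taylorCoeffWithin f m I x)
    (hPS : ∀ s ∈ S, P.eval s = f s) :
    ∃ ξ ∈ J, taylorCoeffWithin f (#S + k) I ξ = P.coeff (#S + k) := by
  obtain ⟨ξ, hξJ, hξ⟩ := exists_zero_of_multiple_zero hJ (k := k) (S := S)
    (G := fun m t => iteratedDerivWithin m f I t - (derivative^[m] P).eval t)
    (fun m hm t ht => by
      rw [iteratedDerivWithin_succ, Function.iterate_succ_apply']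
      have hdiff := hf.differentiableOn_iteratedDerivWithin (by exact_mod_cast hm) hI
      exact ((hdiff t (hJI ht)).hasDerivWithinAt.mono hJI).sub
        (Polynomial.hasDerivAt _ t).hasDerivWithinAt)
    hx
    (fun m hm => by
      rw [eval_iterate_derivative_eq_factorial_mul_coeff_taylor, hPx m hm,
        iteratedDerivWithin_eq_factorial_mul_taylorCoeffWithin, sub_self])
    hxS hSJ
    (fun s hs => by
      rw [iteratedDerivWithin_zero, Function.iterate_zero_apply, hPS s hs, sub_self])
  refine ⟨ξ, hξJ, mul_left_cancel₀ (Nat.cast_ne_zero.2 (#S + k).factorial_ne_zero) ?_⟩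
  rw [← iteratedDerivWithin_eq_factorial_mul_taylorCoeffWithin,
    ← eval_iterate_derivative_eq_factorial_mul_coeff hdeg ξ, sub_eq_zero.1 hξ]

/-- The Taylor polynomial of order `k` of `f` within `I` at `x`, in powers of `X - x`: Mathlib's
`taylorWithin` as a genuine polynomial, so that it can be multiplied and differentiated. -/
noncomputable def taylorPolynomial (f : ℝ → ℝ) (k : ℕ) (I : Set ℝ) (x : ℝ) : ℝ[X] :=
  ∑ m ∈ range (k + 1), C (taylorCoeffWithin f m I x) * (X - C x) ^ m

lemma eval_taylorPolynomial (t : ℝ) :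
    (taylorPolynomial f k I x).eval t = taylorWithinEval f k I x t := by
  rw [taylorPolynomial, eval_finsetSum, taylor_within_apply]
  refine sum_congr rfl fun m _ => ?_
  rw [eval_C_mul, eval_pow, eval_sub, eval_X, eval_C, taylorCoeffWithin, smul_eq_mul, smul_eq_mul]
  ring

lemma natDegree_taylorPolynomial_le : (taylorPolynomial f k I x).natDegree ≤ k := by
  refine natDegree_sum_le_of_forall_le _ _ fun m hm => (natDegree_C_mul_le _ _).trans ?_
  rw [natDegree_pow, natDegree_X_sub_C, mul_one]
  exact mem_range_succ_iff.1 hm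

lemma taylor_X_sub_C {R : Type*} [CommRing R] (t : R) : taylor t (X - C t) = X := by
  rw [map_sub, taylor_X, taylor_C, add_sub_cancel_right]

lemma coeff_taylor_taylorPolynomial {m : ℕ} (hm : m ≤ k) :
    (taylor x (taylorPolynomial f k I x)).coeff m = taylorCoeffWithin f m I x := by
  have hshift : taylor x (taylorPolynomial f k I x) =
      ∑ l ∈ range (k + 1), C (taylorCoeffWithin f l I x) * X ^ l := by
    simp only [taylorPolynomial, map_sum, taylor_mul, taylor_C, taylor_pow, taylor_X_sub_C]
  rw [hshift, finsetSum_coeff]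
  simp only [coeff_C_mul_X_pow, sum_ite_eq, mem_range_succ_iff, if_pos hm]

lemma exists_taylorCoeffWithin_eq_coeff_of_factor {S : Finset ℝ} (hS : S.Nonempty)
    (hf : ContDiffOn ℝ (#S + k : ℕ) f I) (hI : UniqueDiffOn ℝ I) (hJ : J.OrdConnected)
    (hJI : J ⊆ I) (hx : x ∈ J) (hxS : x ∉ S) (hSJ : ↑S ⊆ J) {W : ℝ[X]} (hdeg : W.natDegree ≤ #S)
    (hWx : W.eval x = 0)
    (hWS : ∀ s ∈ S, (s - x) ^ k * W.eval s = f s - taylorWithinEval f k I x s) :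
    ∃ ξ ∈ J, taylorCoeffWithin f (#S + k) I ξ = W.coeff #S := by
  let P : ℝ[X] := taylorPolynomial f k I x + W * (X - C x) ^ k
  have hpow : ((X - C x) ^ k).natDegree ≤ k := by rw [natDegree_pow, natDegree_X_sub_C, mul_one]
  have hT : (taylorPolynomial f k I x).natDegree < #S + k :=
    natDegree_taylorPolynomial_le.trans_lt (by have := hS.card_pos; lia)
  have hPdeg : P.natDegree ≤ #S + k :=
    natDegree_add_le_of_degree_le hT.le (natDegree_mul_le_of_le hdeg hpow)
  have hPx : ∀ m ≤ k, (taylor x P).coeff m = taylorCoeffWithin f m I x := by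
    intro m hm
    have hvanish : (taylor x W * X ^ k).coeff m = 0 := by
      rcases hm.lt_or_eq with hlt | rfl
      · rw [coeff_mul_X_pow', if_neg hlt.not_ge]
      · rw [coeff_mul_X_pow', if_pos le_rfl, Nat.sub_self, taylor_coeff_zero, hWx]
    rw [map_add, taylor_mul, taylor_pow, taylor_X_sub_C, coeff_add, hvanish, add_zero,
      coeff_taylor_taylorPolynomial hm]
  have hPS : ∀ s ∈ S, P.eval s = f s := by
    intro s hs
    rw [eval_add, eval_mul, eval_taylorPolynomial, eval_pow, eval_sub, eval_X, eval_C, mul_comm,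
      hWS s hs, add_sub_cancel]
  have hlead : P.coeff (#S + k) = W.coeff #S := by
    have hmonic : ((X - C x) ^ k).coeff k = 1 := by
      simpa only [natDegree_pow, natDegree_X_sub_C, mul_one] using
        ((monic_X_sub_C x).pow k).coeff_natDegree
    rw [coeff_add, coeff_eq_zero_of_natDegree_lt hT, zero_add,
      coeff_mul_add_eq_of_natDegree_le hdeg hpow, hmonic, mul_one]
  rw [← hlead]
  exact exists_taylorCoeffWithin_eq_coeff hf hI hJ hJI hx hxS hSJ hPdeg hPx hPS

variable {ι : Type*} [DecidableEq ι] {s : Finset ι} {v : ι → ℝ}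

lemma exists_eval_interpolate_taylor_quotient (hs : s.Nonempty) (hv : Set.InjOn v s)
    (hf : ContDiffOn ℝ (#s + k : ℕ) f I) (hI : UniqueDiffOn ℝ I) (hJ : J.OrdConnected)
    (hJI : J ⊆ I) (hx : x ∈ J) (hvJ : ∀ i ∈ s, v i ∈ J) (hvx : ∀ i ∈ s, v i ≠ x) :
    ∃ ξ ∈ J, (Lagrange.interpolate s v fun i =>
        (f (v i) - taylorWithinEval f k I x (v i)) / (v i - x) ^ k).eval x =
      -(∏ i ∈ s, (x - v i)) * taylorCoeffWithin f (#s + k) I ξ := by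
  set u : ι → ℝ := fun i => (f (v i) - taylorWithinEval f k I x (v i)) / (v i - x) ^ k with hu
  set Q := Lagrange.interpolate s v u
  have hcard : #(s.image v) = #s := card_image_of_injOn hv
  have hprod : ∏ i ∈ s, (x - v i) ≠ 0 :=
    prod_ne_zero_iff.2 fun i hi => sub_ne_zero.2 (hvx i hi).symm
  have hQ : Q.degree < #s := Lagrange.degree_interpolate_lt u hv
  let K := -Q.eval x / ∏ i ∈ s, (x - v i)
  let W := Q + C K * Lagrange.nodal s v
  have hWdeg : W.natDegree ≤ #s :=
    natDegree_add_le_of_degree_le (natDegree_le_of_degree_le hQ.le)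
      ((natDegree_C_mul_le _ _).trans Lagrange.natDegree_nodal.le)
  have hWx : W.eval x = 0 := by
    rw [eval_add, eval_C_mul, Lagrange.eval_nodal, div_mul_cancel₀ _ hprod, add_neg_cancel]
  have hWv : ∀ i ∈ s, (v i - x) ^ k * W.eval (v i) = f (v i) - taylorWithinEval f k I x (v i) := by
    intro i hi
    rw [eval_add, eval_C_mul, Lagrange.eval_nodal_at_node hi, mul_zero, add_zero,
      Lagrange.eval_interpolate_at_node u hv hi, hu,
      mul_div_cancel₀ _ (pow_ne_zero k (sub_ne_zero.2 (hvx i hi)))]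
  have hWlead : W.coeff #s = K := by
    have hmonic : (Lagrange.nodal s v).coeff #s = 1 := by
      simpa only [Lagrange.natDegree_nodal] using
        (Lagrange.nodal_monic (s := s) (v := v)).coeff_natDegree
    rw [coeff_add, coeff_eq_zero_of_degree_lt hQ, coeff_C_mul, hmonic, mul_one, zero_add]
  obtain ⟨ξ, hξJ, hξ⟩ := exists_taylorCoeffWithin_eq_coeff_of_factor (hs.image v)
    (by rwa [hcard]) hI hJ hJI hx (by simpa only [mem_image, not_exists, not_and] using hvx)
    (by rw [coe_image, Set.image_subset_iff]; exact hvJ) (by rwa [hcard]) hWx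
    (forall_mem_image.2 hWv)
  refine ⟨ξ, hξJ, ?_⟩
  rw [hcard, hWlead] at hξ
  rw [hξ, neg_mul, mul_div_cancel₀ _ hprod, neg_neg]

lemma interpolate_taylor_quotient (hvx : ∀ i ∈ s, v i ≠ x) :
    Lagrange.interpolate s v (fun i =>
        (f (v i) - taylorWithinEval f k I x (v i)) / (v i - x) ^ k) =
      Lagrange.interpolate s v (fun i => f (v i) / (v i - x) ^ k) -
        ∑ m ∈ range (k + 1), taylorCoeffWithin f m I x •
          Lagrange.interpolate s v (fun i => 1 / (v i - x) ^ (k - m)) := by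
  simp only [← map_smul, ← map_sum, ← map_sub]
  refine Lagrange.interpolate_eq_of_values_eq_on _ _ fun i hi => ?_
  have hne : v i - x ≠ 0 := sub_ne_zero.2 (hvx i hi)
  simp only [Pi.sub_apply, Finset.sum_apply, Pi.smul_apply, smul_eq_mul, sub_div,
    ← eval_taylorPolynomial, taylorPolynomial, eval_finsetSum, sum_div, eval_C_mul, eval_pow,
    eval_sub, eval_X, eval_C]
  congr 1
  refine sum_congr rfl fun m hm => ?_
  rw [mul_div_assoc, pow_sub₀ _ hne (mem_range_succ_iff.1 hm)]
  field_simp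

lemma exists_iterated_differentiation_formula (hs : s.Nonempty) (hv : Set.InjOn v s)
    (hf : ContDiffOn ℝ (#s + k : ℕ) f I) (hI : UniqueDiffOn ℝ I) (hJ : J.OrdConnected)
    (hJI : J ⊆ I) (hx : x ∈ J) (hvJ : ∀ i ∈ s, v i ∈ J) (hvx : ∀ i ∈ s, v i ≠ x) :
    ∃ ξ ∈ J, ∑ m ∈ range (k + 1), taylorCoeffWithin f m I x *
        (Lagrange.interpolate s v fun i => 1 / (v i - x) ^ (k - m)).eval x =
      (Lagrange.interpolate s v fun i => f (v i) / (v i - x) ^ k).eval x +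
        (∏ i ∈ s, (x - v i)) * taylorCoeffWithin f (#s + k) I ξ := by
  obtain ⟨ξ, hξJ, hξ⟩ := exists_eval_interpolate_taylor_quotient hs hv hf hI hJ hJI hx hvJ hvx
  refine ⟨ξ, hξJ, ?_⟩
  rw [interpolate_taylor_quotient hvx] at hξ
  simp only [eval_sub, eval_finsetSum, eval_smul, smul_eq_mul] at hξ
  linarith

end Interpolation

section Aitken

open Finset Polynomial

lemma eval_interpolate_eq_erase {F ι : Type*} [Field F] [DecidableEq ι] {s : Finset ι} {v : ι → F}
    (hv : Set.InjOn v s) {i j : ι} (hi : i ∈ s) (hj : j ∈ s) (hij : i ≠ j) (r : ι → F) (x : F) :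
    (Lagrange.interpolate s v r).eval x =
      ((v j - x) * (Lagrange.interpolate (s.erase j) v r).eval x -
        (v i - x) * (Lagrange.interpolate (s.erase i) v r).eval x) / (v j - v i) := by
  have hne : v j - v i ≠ 0 := sub_ne_zero.2 fun h => hij (hv hi hj h.symm)
  have hne' : v i - v j ≠ 0 := sub_ne_zero.2 fun h => hij (hv hi hj h)
  rw [Lagrange.interpolate_eq_add_interpolate_erase r hv hi hj hij]
  simp only [Lagrange.basisDivisor, eval_add, eval_mul, eval_C, eval_sub, eval_X]
  field_simp
  ring

lemma aitken_eq_eval_interpolate {X : ℕ → ℝ} (x : ℝ) (g : ℕ → ℝ) {r i j : ℕ} (hri : r ≤ i)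
    (hij : i < j) (hX : Set.InjOn X (insert j (Icc r i) : Finset ℕ)) :
    aitken X x g r i j = (Lagrange.interpolate (insert j (Icc r i)) X g).eval x := by
  induction i, hri using Nat.le_induction generalizing j with
  | base =>
    have hj : j ∉ Icc r r := fun h => hij.not_ge (mem_Icc.1 h).2
    rw [eval_interpolate_eq_erase hX (mem_insert_of_mem (right_mem_Icc.2 le_rfl))
      (mem_insert_self j _) hij.ne, erase_insert hj, erase_insert_of_ne hij.ne', Icc_self,
      erase_singleton, insert_empty, Lagrange.interpolate_singleton,
      Lagrange.interpolate_singleton, eval_C, eval_C, aitken, dif_pos le_rfl]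
  | succ i hri ih =>
    have hj : j ∉ Icc r (i + 1) := fun h => hij.not_ge (mem_Icc.1 h).2
    have hi : i + 1 ∉ Icc r i := fun h => i.lt_succ_self.not_ge (mem_Icc.1 h).2
    have hIcc : insert (i + 1) (Icc r i) = Icc r (i + 1) :=
      insert_Icc_right_eq_Icc_add_one (hri.trans i.le_succ)
    have hXi : Set.InjOn X (insert (i + 1) (Icc r i) : Finset ℕ) :=
      hX.mono (by rw [hIcc]; exact coe_subset.2 (subset_insert _ _))
    have hXj : Set.InjOn X (insert j (Icc r i) : Finset ℕ) :=
      hX.mono (coe_subset.2 (insert_subset_insert j (hIcc ▸ subset_insert _ _)))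
    rw [eval_interpolate_eq_erase hX
      (mem_insert_of_mem (right_mem_Icc.2 (hri.trans i.le_succ))) (mem_insert_self j _) hij.ne,
      erase_insert hj, erase_insert_of_ne hij.ne', ← hIcc, erase_insert hi,
      ← ih i.lt_succ_self hXi, ← ih (i.lt_succ_self.trans hij) hXj, aitken,
      dif_neg (by lia), Nat.add_sub_cancel]

lemma aitken_zero_eq_eval_interpolate {X : ℕ → ℝ} (x : ℝ) (g : ℕ → ℝ) {n : ℕ} (hn : 1 ≤ n)
    (hX : Set.InjOn X (range (n + 1))) :
    aitken X x g 0 (n - 1) n = (Lagrange.interpolate (range (n + 1)) X g).eval x := by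
  have hrange : insert n (Icc 0 (n - 1)) = range (n + 1) := by
    ext i
    simp only [mem_insert, mem_Icc, mem_range]
    lia
  rw [aitken_eq_eval_interpolate x g (Nat.zero_le _) (by lia) (by rwa [hrange]), hrange]

lemma aitken_const_one {X : ℕ → ℝ} (x : ℝ) {n : ℕ} (hn : 1 ≤ n)
    (hX : Set.InjOn X (range (n + 1))) : aitken X x (fun _ => 1) 0 (n - 1) n = 1 := by
  rw [aitken_zero_eq_eval_interpolate x _ hn hX]
  exact (congrArg (eval x) (Lagrange.interpolate_one hX nonempty_range_add_one)).trans eval_one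

lemma exists_aitken_iterated_differentiation_formula {I : Set ℝ} {f : ℝ → ℝ} {X : ℕ → ℝ} {x : ℝ}
    {n k : ℕ} (hn : 1 ≤ n) (hf : ContDiffOn ℝ (n + 1 + k : ℕ) f I) (hI : UniqueDiffOn ℝ I)
    (hconv : Convex ℝ I) (hx : x ∈ I) (hXI : ∀ i ≤ n, X i ∈ I) (hXx : ∀ i ≤ n, X i ≠ x)
    (hX : Set.InjOn X (range (n + 1))) :
    ∃ ξ ∈ convexHull ℝ (insert x (X '' Set.Iic n)),
      ∑ m ∈ range (k + 1), taylorCoeffWithin f m I x *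
          aitken X x (fun i => 1 / (X i - x) ^ (k - m)) 0 (n - 1) n =
        aitken X x (fun i => f (X i) / (X i - x) ^ k) 0 (n - 1) n +
          (∏ i ∈ range (n + 1), (x - X i)) * taylorCoeffWithin f (n + 1 + k) I ξ := by
  have hhull := subset_convexHull ℝ (insert x (X '' Set.Iic n))
  have hsub : convexHull ℝ (insert x (X '' Set.Iic n)) ⊆ I :=
    convexHull_min (Set.insert_subset hx (Set.image_subset_iff.2 hXI)) hconv
  simp only [aitken_zero_eq_eval_interpolate x _ hn hX]
  simpa only [card_range] using
    exists_iterated_differentiation_formula (s := range (n + 1)) nonempty_range_add_one hX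
      (by rwa [card_range]) hI (convex_convexHull ℝ _).ordConnected hsub
      (hhull (Set.mem_insert x _))
      (fun i hi => hhull (Set.mem_insert_of_mem x ⟨i, mem_range_succ_iff.1 hi, rfl⟩))
      (fun i hi => hXx i (mem_range_succ_iff.1 hi))

end Aitken

section Convolution

open Finset

lemma convolution_eq_of_recurrence {R : Type*} [CommRing R] {n : ℕ} {a A : ℕ → R} (ha0 : a 0 = 1)
    (hA0 : A 0 = 1) (ha : ∀ m, 1 ≤ m → m ≤ n → a m = -∑ j ∈ range m, a j * A (m - j)) {m : ℕ}
    (hm : m ≤ n) : ∑ j ∈ range (m + 1), a j * A (m - j) = if m = 0 then 1 else 0 := by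
  rw [sum_range_succ, Nat.sub_self, hA0, mul_one]
  split_ifs with h0
  · rw [h0, sum_range_zero, ha0, zero_add]
  · rw [ha m (Nat.one_le_iff_ne_zero.2 h0) hm, add_neg_cancel]

variable {R : Type*} [CommSemiring R] {n : ℕ} {a A b c d : ℕ → R}

lemma eq_convolution_of_convolution_eq
    (haA : ∀ m ≤ n, ∑ j ∈ range (m + 1), a j * A (m - j) = if m = 0 then 1 else 0)
    (hcA : ∀ k ≤ n, ∑ m ∈ range (k + 1), c m * A (k - m) = b k) {k : ℕ} (hk : k ≤ n) :
    c k = ∑ j ∈ range (k + 1), a j * b (k - j) := by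
  have hcoeff (φ ψ : PowerSeries R) (l : ℕ) :
      (φ * ψ).coeff l = ∑ m ∈ range (l + 1), φ.coeff m * ψ.coeff (l - m) := by
    rw [PowerSeries.coeff_mul, Nat.sum_antidiagonal_eq_sum_range_succ
      fun i j => φ.coeff i * ψ.coeff j]
  have hassoc : (PowerSeries.mk c * (PowerSeries.mk a * PowerSeries.mk A)).coeff k =
      (PowerSeries.mk a * (PowerSeries.mk c * PowerSeries.mk A)).coeff k := by
    rw [mul_left_comm]
  simp only [hcoeff, PowerSeries.coeff_mk] at hassoc
  calc c k = ∑ m ∈ range (k + 1), c m * if k - m = 0 then 1 else 0 := by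
        rw [sum_range_succ, Nat.sub_self, if_pos rfl, mul_one, sum_eq_zero, zero_add]
        intro m hm
        rw [if_neg (Nat.sub_pos_of_lt (mem_range.1 hm)).ne', mul_zero]
    _ = ∑ m ∈ range (k + 1), c m * ∑ j ∈ range (k - m + 1), a j * A (k - m - j) :=
        sum_congr rfl fun m _ => by rw [haA _ ((k.sub_le m).trans hk)]
    _ = ∑ j ∈ range (k + 1), a j * ∑ m ∈ range (k - j + 1), c m * A (k - j - m) := hassoc
    _ = ∑ j ∈ range (k + 1), a j * b (k - j) :=
        sum_congr rfl fun j _ => by rw [hcA _ ((k.sub_le j).trans hk)]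

lemma sum_convolution_mul (a b w : ℕ → R) (n : ℕ) :
    ∑ k ∈ range (n + 1), (∑ j ∈ range (k + 1), a j * b (k - j)) * w k =
      ∑ k ∈ range (n + 1), b k * ∑ m ∈ range (n - k + 1), a m * w (k + m) := by
  have hflip := sum_range_diag_flip (n + 1) fun k m => b k * (a m * w (k + m))
  calc ∑ k ∈ range (n + 1), (∑ j ∈ range (k + 1), a j * b (k - j)) * w k
      = ∑ k ∈ range (n + 1), ∑ j ∈ range (k + 1), b j * (a (k - j) * w (j + (k - j))) := by
        refine sum_congr rfl fun k _ => ?_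
        rw [← sum_range_reflect, sum_mul]
        refine sum_congr rfl fun j hj => ?_
        have hjk : j ≤ k := mem_range_succ_iff.1 hj
        rw [Nat.add_sub_cancel, Nat.sub_sub_self hjk, Nat.add_sub_cancel' hjk]
        ring
    _ = ∑ k ∈ range (n + 1), b k * ∑ m ∈ range (n - k + 1), a m * w (k + m) := by
        rw [hflip]
        refine sum_congr rfl fun k hk => ?_
        rw [mul_sum, Nat.sub_add_comm (mem_range_succ_iff.1 hk)]

lemma sum_mul_eq_of_convolution_eq {P : R}
    (haA : ∀ m ≤ n, ∑ j ∈ range (m + 1), a j * A (m - j) = if m = 0 then 1 else 0)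
    (hcA : ∀ k ≤ n, ∑ m ∈ range (k + 1), c m * A (k - m) = b k + P * d k) (w : ℕ → R) :
    ∑ k ∈ range (n + 1), c k * w k =
      (∑ k ∈ range (n + 1), b k * ∑ m ∈ range (n - k + 1), a m * w (k + m)) +
        P * ∑ k ∈ range (n + 1), ∑ j ∈ range (k + 1), a j * w k * d (k - j) := by
  rw [← sum_convolution_mul, mul_sum, ← sum_add_distrib]
  refine sum_congr rfl fun k hk => ?_
  rw [eq_convolution_of_convolution_eq haA hcA (mem_range_succ_iff.1 hk), sum_mul, sum_mul, mul_sum,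
    ← sum_add_distrib]
  exact sum_congr rfl fun j _ => by ring

end Convolution

section IntegralTaylor

open Finset MeasureTheory intervalIntegral

variable {f : ℝ → ℝ} {a b : ℝ}

lemma hasDerivWithinAt_integral_uIcc (hf : ContinuousOn f (Set.uIcc a b)) {t : ℝ}
    (ht : t ∈ Set.uIcc a b) :
    HasDerivWithinAt (fun u => ∫ s in a..u, f s) (f t) (Set.uIcc a b) t := by
  have : Fact (t ∈ Set.Icc (a ⊓ b) (a ⊔ b)) := ⟨ht⟩
  have hint : IntervalIntegrable f volume a t :=
    (hf.mono (Set.uIcc_subset_uIcc_left ht)).intervalIntegrable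
  exact integral_hasDerivWithinAt_right (s := Set.Icc (a ⊓ b) (a ⊔ b)) hint
    (hf.stronglyMeasurableAtFilter_nhdsWithin measurableSet_Icc t) (hf t ht)

lemma contDiffOn_integral_uIcc {n : ℕ} (hab : a ≠ b) (hf : ContDiffOn ℝ n f (Set.uIcc a b)) :
    ContDiffOn ℝ (n + 1 : ℕ) (fun u => ∫ s in a..u, f s) (Set.uIcc a b) := by
  have hF := fun t => hasDerivWithinAt_integral_uIcc hf.continuousOn (t := t)
  have hI := uniqueDiffOn_uIcc hab
  rw [Nat.cast_add, Nat.cast_one, contDiffOn_succ_iff_derivWithin hI]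
  exact ⟨fun t ht => (hF t ht).differentiableWithinAt, by simp,
    hf.congr fun t ht => (hF t ht).derivWithin (hI t ht)⟩

lemma iteratedDerivWithin_succ_integral_uIcc (hab : a ≠ b) (hf : ContinuousOn f (Set.uIcc a b))
    (m : ℕ) : Set.EqOn (iteratedDerivWithin (m + 1) (fun u => ∫ s in a..u, f s) (Set.uIcc a b))
      (iteratedDerivWithin m f (Set.uIcc a b)) (Set.uIcc a b) := by
  rw [iteratedDerivWithin_succ']
  exact iteratedDerivWithin_congr fun t ht =>
    (hasDerivWithinAt_integral_uIcc hf ht).derivWithin (uniqueDiffOn_uIcc hab t ht)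

lemma exists_integral_sub_taylor_sum_eq {n : ℕ} (hab : a ≠ b)
    (hf : ContDiffOn ℝ (n + 1 : ℕ) f (Set.uIcc a b)) :
    ∃ ξ ∈ Set.uIcc a b, (∫ s in a..b, f s) -
        ∑ k ∈ range (n + 1), taylorCoeffWithin f k (Set.uIcc a b) a *
          ((b - a) ^ (k + 1) / (k + 1)) =
      iteratedDerivWithin (n + 1) f (Set.uIcc a b) ξ * (b - a) ^ (n + 2) / (n + 2).factorial := by
  let F : ℝ → ℝ := fun u => ∫ s in a..u, f s
  have hFa : F a = 0 := integral_same
  have hF := contDiffOn_integral_uIcc hab hf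
  have hFderiv := iteratedDerivWithin_succ_integral_uIcc hab hf.continuousOn
  have htaylor : taylorWithinEval F (n + 1) (Set.uIcc a b) a b =
      ∑ k ∈ range (n + 1), taylorCoeffWithin f k (Set.uIcc a b) a *
        ((b - a) ^ (k + 1) / (k + 1)) := by
    rw [taylor_within_apply, sum_range_succ', iteratedDerivWithin_zero, hFa, smul_zero,
      add_zero]
    refine sum_congr rfl fun k _ => ?_
    rw [hFderiv k Set.left_mem_uIcc, taylorCoeffWithin, smul_eq_mul, smul_eq_mul,
      Nat.factorial_succ]
    push_cast
    field_simp
  obtain ⟨ξ, hξ, hrem⟩ := taylor_mean_remainder_lagrange (n := n + 1) hab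
    (hF.of_le (by exact_mod_cast (n + 1).le_succ))
    ((hF.differentiableOn_iteratedDerivWithin (by exact_mod_cast (n + 1).lt_succ_self)
      (uniqueDiffOn_uIcc hab)).mono Set.uIoo_subset_uIcc_self)
  have hξ' := Set.uIoo_subset_uIcc_self hξ
  refine ⟨ξ, hξ', ?_⟩
  rw [← htaylor, ← hFderiv _ hξ']
  exact hrem

lemma iteratedDerivWithin_eq_of_subset {s t : Set ℝ} {n : ℕ} (hst : s ⊆ t)
    (hs : UniqueDiffOn ℝ s) (ht : UniqueDiffOn ℝ t) (hf : ContDiffOn ℝ n f t) {x : ℝ}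
    (hx : x ∈ s) : iteratedDerivWithin n f s x = iteratedDerivWithin n f t x := by
  rw [iteratedDerivWithin, iteratedFDerivWithin_subset hst hs ht hf hx, iteratedDerivWithin]

lemma abs_integral_sub_taylor_sum_le {n : ℕ} {I : Set ℝ} (hab : a ≠ b) (hI : UniqueDiffOn ℝ I)
    (hsub : Set.uIcc a b ⊆ I) (hf : ContDiffOn ℝ (n + 1 : ℕ) f I) :
    |(∫ s in a..b, f s) - ∑ k ∈ range (n + 1), taylorCoeffWithin f k I a *
        ((b - a) ^ (k + 1) / (k + 1))| ≤
      sSup ((fun s => |iteratedDerivWithin (n + 1) f I s|) '' Set.uIcc a b) *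
        |b - a| ^ (n + 2) / (n + 2).factorial := by
  have hderiv : ∀ m ≤ n + 1, Set.EqOn (iteratedDerivWithin m f (Set.uIcc a b))
      (iteratedDerivWithin m f I) (Set.uIcc a b) := fun m hm _ ht =>
    iteratedDerivWithin_eq_of_subset hsub (uniqueDiffOn_uIcc hab) hI
      (hf.of_le (by exact_mod_cast hm)) ht
  obtain ⟨ξ, hξ, hrem⟩ := exists_integral_sub_taylor_sum_eq hab (hf.mono hsub)
  have hcoeff : ∀ k ∈ range (n + 1), taylorCoeffWithin f k I a * ((b - a) ^ (k + 1) / (k + 1)) =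
      taylorCoeffWithin f k (Set.uIcc a b) a * ((b - a) ^ (k + 1) / (k + 1)) := fun k hk => by
    rw [taylorCoeffWithin, taylorCoeffWithin,
      hderiv k (mem_range.1 hk).le Set.left_mem_uIcc]
  have hbdd : BddAbove ((fun s => |iteratedDerivWithin (n + 1) f I s|) '' Set.uIcc a b) :=
    isCompact_uIcc.bddAbove_image
      ((hf.continuousOn_iteratedDerivWithin le_rfl hI).abs.mono hsub)
  rw [sum_congr rfl hcoeff, hrem, hderiv _ le_rfl hξ, abs_div, abs_mul, abs_pow, Nat.abs_cast]
  gcongr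
  exact le_csSup hbdd ⟨ξ, hξ, rfl⟩

end IntegralTaylor

theorem stmt_9 (p q : ℝ) (hpq : p < q) (n : ℕ) (hn : 1 ≤ n)
    (f : ℝ → ℝ) (hf : ContDiffOn ℝ (2 * n + 1 : ℕ) f (Set.Icc p q))
    (x h : ℝ) (hh : h ≠ 0) (hx : x ∈ Set.Icc p q) (hxh : x + h ∈ Set.Icc p q)
    (X : ℕ → ℝ) (hX : ∀ i ≤ n, X i ∈ Set.Icc p q)
    (hxX : ∀ i ≤ n, X i ≠ x)
    (hXX : ∀ i j, i ≤ n → j ≤ n → i ≠ j → X i ≠ X j)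
    (a : ℕ → ℝ) (ha0 : a 0 = 1)
    (hak : ∀ m, 1 ≤ m → m ≤ n →
      a m = -(∑ j ∈ Finset.range m, a j * aitken X x (fun i => 1 / (X i - x) ^ (m - j)) 0 (n - 1) n))
    (γ : ℕ → ℝ)
    (hγ : ∀ k ≤ n, γ k = ∑ m ∈ Finset.range (n - k + 1), a m * h ^ (k + m + 1) / (k + m + 1 : ℝ)) :
    ∃ ξ : ℕ → ℕ → ℝ,
      (∀ k ≤ n, ∀ j ≤ k, ξ k j ∈ convexHull ℝ (insert x (X '' Set.Iic n))) ∧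
      ∃ R : ℝ,
        |R| ≤ sSup ((fun s => |iteratedDerivWithin (n + 1) f (Set.Icc p q) s|) '' Set.uIcc x (x + h))
                * |h| ^ (n + 2) / (Nat.factorial (n + 2) : ℝ) ∧
        (∫ s in x..(x + h), f s)
          = (∑ k ∈ Finset.range (n + 1), aitken X x (fun i => f (X i) / (X i - x) ^ k) 0 (n - 1) n * γ k)
            + (∏ i ∈ Finset.range (n + 1), (x - X i))
              * (∑ k ∈ Finset.range (n + 1), ∑ j ∈ Finset.range (k + 1),
                  a j * (h ^ (k + 1) / (k + 1 : ℝ))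
                    * iteratedDerivWithin (k + n + 1 - j) f (Set.Icc p q) (ξ k j)
                      / (Nat.factorial (k + n + 1 - j) : ℝ))
            + R := by
  let A : ℕ → ℝ := fun r => aitken X x (fun i => 1 / (X i - x) ^ r) 0 (n - 1) n
  have hI : UniqueDiffOn ℝ (Set.Icc p q) := uniqueDiffOn_Icc hpq
  have hinj : Set.InjOn X (Finset.range (n + 1)) := fun i hi j hj => not_imp_not.1 <|
    hXX i j (Finset.mem_range_succ_iff.1 hi) (Finset.mem_range_succ_iff.1 hj)
  choose! ξ hξ hc using fun k (hk : k ≤ n) =>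
    exists_aitken_iterated_differentiation_formula hn (k := k)
      (hf.of_le (by exact_mod_cast (by lia : n + 1 + k ≤ 2 * n + 1))) hI (convex_Icc p q) hx hX hxX
      hinj
  have hA0 : A 0 = 1 := by simpa only [A, pow_zero, div_one] using aitken_const_one x hn hinj
  have hsum := sum_mul_eq_of_convolution_eq (A := A)
    (fun m hm => convolution_eq_of_recurrence ha0 hA0 hak hm) hc fun k => h ^ (k + 1) / (k + 1)
  have hrem := abs_integral_sub_taylor_sum_le (n := n) (by simpa using hh) hI
    (Set.uIcc_subset_Icc hx hxh) (hf.of_le (by exact_mod_cast (by lia : n + 1 ≤ 2 * n + 1)))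
  rw [add_sub_cancel_left] at hrem
  refine ⟨fun k j => ξ (k - j), fun k hk j _ => hξ _ ((k.sub_le j).trans hk), _, hrem, ?_⟩
  rw [hsum, ← sub_eq_iff_eq_add, sub_sub_cancel]
  congr 1
  · refine Finset.sum_congr rfl fun k hk => ?_
    simp only [hγ k (Finset.mem_range_succ_iff.1 hk), Nat.cast_add, mul_div_assoc]
  · congr 1
    refine Finset.sum_congr rfl fun k _ => Finset.sum_congr rfl fun j hj => ?_
    have hjk : k + n + 1 - j = n + 1 + (k - j) := by have := Finset.mem_range_succ_iff.1 hj; lia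
    rw [hjk, taylorCoeffWithin, smul_eq_mul, ← div_eq_inv_mul, mul_div_assoc]
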